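/- Let G be the mixed graph on Fin 5 (vertices a = 0, b = 1, c = 2, d = 3, e = 4) with directed edges a→b, b→c, c→d and bidirected edges a↔c, a↔d (vertex e isolated); G is a bow-free acyclic path diagram. Let Σ = !![1, 3/4, 2/9, 0, 0; 3/4, 1, 3/4, 0, 0; 2/9, 3/4, 1, 0, 0; 0, 0, 0, 1, 1/2; 0, 0, 0, 1/2, 1] : Matrix (Fin 5) (Fin 5) ℝ. Then: (i) Σ is positive definite; (ii) Σ satisfies the six polynomial constraints σ_ae = 0, σ_be = 0, σ_ce = 0, det !![σ_bd, σ_bc; σ_cd, σ_cc] = 0, det !![σ_aa, σ_ab, 0; σ_ba, σ_bb, σ_bd; σ_ca, σ_cb, σ_cd] = 0, and det !![σ_aa, σ_ab, 0; σ_ba, σ_bb, σ_bc; σ_ca, σ_cb, σ_cc] = 0, where σ_xy denotes the (x,y) entry of Σ; yet (iii) Σ ∉ M(G) — indeed every element Σ' of M(G) satisfies Σ'_{d e} = 0 while Σ_{d e} = 1/2. (The claims of Example 1: the graphically represented ideal of this BAP is not PD-primary.) -/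

import Mathlib

open Matrix

structure MixedGraph (V : Type*) where
  D : V → V → Prop
  B : V → V → Prop
  symm : ∀ v w, B v w → B w v
  irrefl : ∀ v, ¬ B v v

namespace MixedGraph

variable {V : Type*}

/-- The graph is acyclic: no directed cycles. -/
def Acyclic (G : MixedGraph V) : Prop := ∀ v, ¬ Relation.TransGen G.D v v

/-- The graph is simple: for distinct `v, w`, at most one of
`D v w`, `D w v`, `B v w` holds. -/
def Simple (G : MixedGraph V) : Prop :=
  ∀ v w, v ≠ w →
    ¬ (G.D v w ∧ G.D w v) ∧ ¬ (G.D v w ∧ G.B v w) ∧ ¬ (G.D w v ∧ G.B v w)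

/-- A bow-free acyclic path diagram: a simple acyclic mixed graph. -/
def IsBAP (G : MixedGraph V) : Prop := G.Acyclic ∧ G.Simple

/-- `Λ` is compatible with `G`. -/
def LamCompat (G : MixedGraph V) (Λ : Matrix V V ℝ) : Prop :=
  ∀ v w, ¬ G.D v w → Λ v w = 0

/-- `Ω` is compatible with `G`. -/
def OmCompat [Fintype V] (G : MixedGraph V) (Ω : Matrix V V ℝ) : Prop :=
  Ω.PosDef ∧ ∀ v w, v ≠ w → ¬ G.B v w → ¬ G.B w v → Ω v w = 0

/-- The model `M(G)` of a mixed graph. -/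
def model [Fintype V] [DecidableEq V] (G : MixedGraph V) : Set (Matrix V V ℝ) :=
  {S | ∃ Λ Ω : Matrix V V ℝ, G.LamCompat Λ ∧ G.OmCompat Ω ∧
    S = ((1 - Λ)⁻¹)ᵀ * Ω * (1 - Λ)⁻¹}

/-- The algebraic model `A(G)`: the real Zariski closure of `M(G)`. -/
def algModel [Fintype V] [DecidableEq V] (G : MixedGraph V) : Set (Matrix V V ℝ) :=
  {S | ∀ p : MvPolynomial (V × V) ℝ,
    (∀ T ∈ G.model, MvPolynomial.eval (fun e => T e.1 e.2) p = 0) →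
    MvPolynomial.eval (fun e => S e.1 e.2) p = 0}

/-- The skeleton (adjacency relation) of `G`. -/
def adj (G : MixedGraph V) (v w : V) : Prop :=
  v ≠ w ∧ (G.D v w ∨ G.D w v ∨ G.B v w)

/-- A collider triple of `G`. -/
def ColliderTriple (G : MixedGraph V) (u v w : V) : Prop :=
  u ≠ v ∧ v ≠ w ∧ u ≠ w ∧ (G.D u v ∨ G.B u v) ∧ (G.D w v ∨ G.B w v)

/-- A v-structure of `G`. -/
def VStructure (G : MixedGraph V) (u v w : V) : Prop :=
  G.ColliderTriple u v w ∧ ¬ G.adj u w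

end MixedGraph

/-- The graph `G` of Example 1: vertices `a = 0, b = 1, c = 2, d = 3, e = 4`,
directed edges `a→b, b→c, c→d`, bidirected edges `a↔c, a↔d`; vertex `e` isolated. -/
def exampleGraph1 : MixedGraph (Fin 5) where
  D v w := (v = 0 ∧ w = 1) ∨ (v = 1 ∧ w = 2) ∨ (v = 2 ∧ w = 3)
  B v w := (v = 0 ∧ w = 2) ∨ (v = 2 ∧ w = 0) ∨ (v = 0 ∧ w = 3) ∨ (v = 3 ∧ w = 0)
  symm := by decide
  irrefl := by decide

/-- The matrix `Σ` of Example 1. -/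
noncomputable def exampleSigma1 : Matrix (Fin 5) (Fin 5) ℝ :=
  !![1, 3/4, 2/9, 0, 0;
     3/4, 1, 3/4, 0, 0;
     2/9, 3/4, 1, 0, 0;
     0, 0, 0, 1, 1/2;
     0, 0, 0, 1/2, 1]

/-!
If a labelling of the vertices is constant along the edges, then both parameter matrices `Λ` and `Ω`
commute with the diagonal matrix that marks one label, and hence so does every covariance matrix of
the model. Such a matrix has no entry between vertices of different labels; marking the isolated
vertex `e` gives `σ_de = 0`. On `Σ` the six constraints say nothing about `σ_de`: the first two
determinants vanish because `σ_bd = σ_cd = 0`, and the third one does not involve `d` or `e`.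
-/

lemma commute_diagonal_iff {n R : Type*} [Fintype n] [DecidableEq n] [CommSemiring R]
    [IsCancelMulZero R] {d : n → R} {A : Matrix n n R} :
    Commute (diagonal d) A ↔ ∀ i j, d i ≠ d j → A i j = 0 := by
  have entry (i j : n) : (diagonal d * A) i j = (A * diagonal d) i j ↔ d i = d j ∨ A i j = 0 := by
    rw [diagonal_mul, mul_diagonal, mul_comm (A i j), mul_eq_mul_right_iff]
  simp only [commute_iff_eq, ← Matrix.ext_iff, entry, or_iff_not_imp_left, ne_eq]

lemma posDef_conjTranspose_mul_diagonal_mul {n R : Type*} [Fintype n] [LinearOrder n]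
    [CommRing R] [PartialOrder R] [StarRing R] [StarOrderedRing R] [NoZeroDivisors R]
    {U : Matrix n n R} {d : n → R} (hU : U.IsUpperTriangular) (hdiag : ∀ i, U i i = 1)
    (hd : ∀ i, 0 < d i) : (Uᴴ * diagonal d * U).PosDef := by
  have hdet : U.det = 1 := by simp [det_of_isUpperTriangular hU, hdiag]
  have hunit : IsUnit U := (isUnit_iff_isUnit_det U).2 (hdet ▸ isUnit_one)
  exact (PosDef.diagonal hd).conjTranspose_mul_mul_same (mulVec_injective_of_isUnit hunit)

namespace MixedGraph

variable {V : Type*} {G : MixedGraph V}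

lemma acyclic_of_forall_lt {α : Type*} [Preorder α] (f : V → α)
    (hf : ∀ v w, G.D v w → f v < f w) : G.Acyclic := by
  intro v hv
  have hlt : Relation.TransGen (· < ·) (f v) (f v) := hv.lift f hf
  rw [Relation.transGen_eq_self] at hlt
  exact lt_irrefl _ hlt

variable [Fintype V] [DecidableEq V]

lemma commute_diagonal_of_mem_model {d : V → ℝ} (hD : ∀ v w, G.D v w → d v = d w)
    (hB : ∀ v w, G.B v w → d v = d w) {S : Matrix V V ℝ} (hS : S ∈ G.model) :
    Commute (diagonal d) S := by
  obtain ⟨Λ, Ω, hΛ, ⟨-, hΩ⟩, rfl⟩ := hS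
  have hΛd : Commute (diagonal d) Λ :=
    commute_diagonal_iff.2 fun v w hvw => hΛ v w (mt (hD v w) hvw)
  have hΩd : Commute (diagonal d) Ω := commute_diagonal_iff.2 fun v w hvw =>
    hΩ v w (ne_of_apply_ne d hvw) (mt (hB v w) hvw) (mt (hB w v) hvw.symm)
  have hinv : Commute (diagonal d) (1 - Λ)⁻¹ := by
    rw [← Matrix.zpow_neg_one]
    exact Matrix.Commute.zpow_right ((Commute.one_right _).sub_right hΛd) (-1)
  have hinvT : Commute (diagonal d) ((1 - Λ)⁻¹)ᵀ :=
    commute_diagonal_iff.2 fun v w hvw => commute_diagonal_iff.1 hinv w v hvw.symm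
  exact (hinvT.mul_right hΩd).mul_right hinv

lemma apply_eq_zero_of_mem_model {α : Type*} {c : V → α} (hD : ∀ v w, G.D v w → c v = c w)
    (hB : ∀ v w, G.B v w → c v = c w) {S : Matrix V V ℝ} (hS : S ∈ G.model) {v w : V}
    (hvw : c v ≠ c w) : S v w = 0 := by
  classical
  let d : V → ℝ := fun u => if c u = c w then 1 else 0
  have hcomm : Commute (diagonal d) S := commute_diagonal_of_mem_model
    (fun x y hxy => by simp only [d, hD x y hxy]) (fun x y hxy => by simp only [d, hB x y hxy]) hS
  exact commute_diagonal_iff.1 hcomm v w (by simp [d, hvw])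

lemma apply_eq_zero_of_mem_model_of_isolated {e : V} (he : ∀ v, ¬ G.adj v e) {S : Matrix V V ℝ}
    (hS : S ∈ G.model) {v : V} (hve : v ≠ e) : S v e = 0 := by
  have eq_iff_of_edge (x y : V) (hxy : G.D x y ∨ G.B x y) : (x = e) = (y = e) := by
    have hx := he x
    have hy := he y
    grind [adj, G.symm x y]
  exact apply_eq_zero_of_mem_model (c := (· = e)) (fun x y hxy => eq_iff_of_edge x y (.inl hxy))
    (fun x y hxy => eq_iff_of_edge x y (.inr hxy)) hS (by simp [hve])

end MixedGraph

lemma exampleGraph1_isBAP : exampleGraph1.IsBAP := by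
  refine ⟨MixedGraph.acyclic_of_forall_lt id ?_, ?_⟩
  · unfold exampleGraph1
    decide
  · unfold MixedGraph.Simple exampleGraph1
    decide

lemma exampleGraph1_not_adj_four : ∀ v, ¬ exampleGraph1.adj v 4 := by
  unfold MixedGraph.adj exampleGraph1
  decide

/-- The unit upper triangular factor `U` of the decomposition `Σ = Uᴴ * diagonal d * U` of the
matrix of Example 1, obtained by symmetric Gaussian elimination. -/
noncomputable def exampleFactor1 : Matrix (Fin 5) (Fin 5) ℝ :=
  !![1, 3/4, 2/9, 0, 0;
     0, 1, 4/3, 0, 0;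
     0, 0, 1, 0, 0;
     0, 0, 0, 1, 1/2;
     0, 0, 0, 0, 1]

lemma exampleSigma1_eq_conjTranspose_mul_diagonal_mul :
    exampleSigma1 = exampleFactor1ᴴ * diagonal ![1, 7/16, 14/81, 1, 3/4] * exampleFactor1 := by
  ext i j
  simp only [mul_apply (M := _ * _), mul_diagonal, conjTranspose_apply, star_trivial,
    Fin.sum_univ_five]
  fin_cases i <;> fin_cases j <;>
    simp only [exampleSigma1, exampleFactor1, of_apply, Fin.reduceFinMk, cons_val] <;> norm_num

lemma exampleSigma1_posDef : exampleSigma1.PosDef := by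
  rw [exampleSigma1_eq_conjTranspose_mul_diagonal_mul]
  refine posDef_conjTranspose_mul_diagonal_mul (fun i j hij => ?_) (fun i => ?_) fun i => ?_
  · fin_cases i <;> fin_cases j <;> first | rfl | exact absurd hij (by decide)
  · fin_cases i <;> rfl
  · fin_cases i <;> norm_num

/-- Example 1: `exampleGraph1` is a BAP; `exampleSigma1` is positive
definite and satisfies the six graphically represented constraints, yet it is not in the
model: every member of the model has vanishing `(d, e)` entry while `Σ` has `1/2` there. -/
theorem example1_not_PD_primary :
    exampleGraph1.IsBAP ∧
    exampleSigma1.PosDef ∧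
    (exampleSigma1 0 4 = 0 ∧ exampleSigma1 1 4 = 0 ∧ exampleSigma1 2 4 = 0 ∧
      (!![exampleSigma1 1 3, exampleSigma1 1 2;
          exampleSigma1 2 3, exampleSigma1 2 2] : Matrix (Fin 2) (Fin 2) ℝ).det = 0 ∧
      (!![exampleSigma1 0 0, exampleSigma1 0 1, 0;
          exampleSigma1 1 0, exampleSigma1 1 1, exampleSigma1 1 3;
          exampleSigma1 2 0, exampleSigma1 2 1, exampleSigma1 2 3] :
            Matrix (Fin 3) (Fin 3) ℝ).det = 0 ∧
      (!![exampleSigma1 0 0, exampleSigma1 0 1, 0;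
          exampleSigma1 1 0, exampleSigma1 1 1, exampleSigma1 1 2;
          exampleSigma1 2 0, exampleSigma1 2 1, exampleSigma1 2 2] :
            Matrix (Fin 3) (Fin 3) ℝ).det = 0) ∧
    ((∀ S ∈ exampleGraph1.model, S 3 4 = 0) ∧ exampleSigma1 3 4 = 1/2 ∧
      exampleSigma1 ∉ exampleGraph1.model) := by
  have hde_model (S) (hS : S ∈ exampleGraph1.model) : S 3 4 = 0 :=
    MixedGraph.apply_eq_zero_of_mem_model_of_isolated exampleGraph1_not_adj_four hS (by decide)
  have hde : exampleSigma1 3 4 = 1/2 := rfl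
  have hbd : exampleSigma1 1 3 = 0 := rfl
  have hcd : exampleSigma1 2 3 = 0 := rfl
  refine ⟨exampleGraph1_isBAP, exampleSigma1_posDef, ⟨rfl, rfl, rfl, ?_, ?_, ?_⟩,
    hde_model, hde, fun hS => ?_⟩
  · exact det_eq_zero_of_column_eq_zero 0 (Fin.forall_fin_two.2 ⟨hbd, hcd⟩)
  · exact det_eq_zero_of_column_eq_zero 2
      (Fin.forall_fin_succ.2 ⟨rfl, Fin.forall_fin_two.2 ⟨hbd, hcd⟩⟩)
  · simp only [exampleSigma1, det_fin_three, of_apply, cons_val]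
    norm_num
  · exact one_half_pos.ne' (hde.symm.trans (hde_model _ hS))
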